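/- Coinduction up to congruence for streams: Let R : Stream' ℕ → Stream' ℕ → Prop, and let cl R be the least equivalence relation on Stream' ℕ that contains R and is a congruence for SCons, pointwise addition ⊕, and the shuffle product ⊗; i.e., cl R is the least relation that contains R, is reflexive, symmetric, and transitive, and satisfies: if a = b and cl R xs ys then cl R (SCons a xs) (SCons b ys); if cl R xs ys and cl R xs' ys' then cl R (xs ⊕ xs') (ys ⊕ ys'); and if cl R xs ys and cl R xs' ys' then cl R (xs ⊗ xs') (ys ⊗ ys'). If for all streams s, t, R s t implies head s = head t and cl R (tail s) (tail t), then for all streams s, t, R s t implies s = t. -/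

import Mathlib

open Stream'

/-- Pointwise addition of streams. -/
def sadd (xs ys : Stream' ℕ) : Stream' ℕ := fun n => xs.get n + ys.get n

/-- Shuffle product of streams (binomial convolution). -/
def sshuffle (xs ys : Stream' ℕ) : Stream' ℕ :=
  fun n => ∑ k ∈ Finset.range (n + 1), n.choose k * xs.get k * ys.get (n - k)

infixl:65 " ⊕ " => sadd
infixl:70 " ⊗ " => sshuffle

/-- The least equivalence relation containing `R` that is a congruence for
`Stream'.cons`, pointwise addition `⊕`, and the shuffle product `⊗`. -/
inductive cl (R : Stream' ℕ → Stream' ℕ → Prop) : Stream' ℕ → Stream' ℕ → Prop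
  | base {s t} : R s t → cl R s t
  | refl (s) : cl R s s
  | symm {s t} : cl R s t → cl R t s
  | trans {s t u} : cl R s t → cl R t u → cl R s u
  | cons {a b : ℕ} {xs ys} : a = b → cl R xs ys →
      cl R (Stream'.cons a xs) (Stream'.cons b ys)
  | add {xs ys xs' ys'} : cl R xs ys → cl R xs' ys' → cl R (xs ⊕ xs') (ys ⊕ ys')
  | mul {xs ys xs' ys'} : cl R xs ys → cl R xs' ys' → cl R (xs ⊗ xs') (ys ⊗ ys')

/-!
Two streams are equal once all their finite prefixes are. Each of the operations `cons`, `⊕` and `⊗`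
is causal: the first `n` entries of its value depend only on the first `n` entries of its arguments.
Hence having the same prefix of length `n` is a congruence, and it contains `cl R` as soon as it
contains `R`. Looking one step ahead along the bisimulation then raises `n` by one.
-/

section Prefix

variable {α : Type*} {s t : Stream' α} {n : ℕ}

theorem take_eq_take_iff_forall_get_eq : s.take n = t.take n ↔ ∀ k < n, s.get k = t.get k := by
  constructor
  · intro h k hk
    rw [← Option.some_inj, ← getElem?_take hk, ← getElem?_take hk, h]
  · intro h
    refine List.ext_getElem (by simp only [length_take]) fun k hs ht => ?_
    rw [take_get, take_get]
    exact h k (by simpa only [length_take] using hs)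

theorem take_cons_congr (a : α) (h : s.take n = t.take n) :
    (Stream'.cons a s).take n = (Stream'.cons a t).take n := by
  have h_succ : (Stream'.cons a s).take (n + 1) = (Stream'.cons a t).take (n + 1) := by
    rw [take_succ_cons, take_succ_cons, h]
  simpa only [dropLast_take, Nat.add_sub_cancel] using congrArg List.dropLast h_succ

end Prefix

section Congruence

variable {xs ys xs' ys' : Stream' ℕ} {n : ℕ}

theorem get_sadd (xs ys : Stream' ℕ) (n : ℕ) : (xs ⊕ ys).get n = xs.get n + ys.get n := rfl

theorem get_sshuffle (xs ys : Stream' ℕ) (n : ℕ) :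
    (xs ⊗ ys).get n = ∑ k ∈ Finset.range (n + 1), n.choose k * xs.get k * ys.get (n - k) := rfl

theorem take_sadd_congr (h : xs.take n = ys.take n) (h' : xs'.take n = ys'.take n) :
    (xs ⊕ xs').take n = (ys ⊕ ys').take n := by
  rw [take_eq_take_iff_forall_get_eq] at h h' ⊢
  intro k hk
  rw [get_sadd, get_sadd, h k hk, h' k hk]

theorem take_sshuffle_congr (h : xs.take n = ys.take n) (h' : xs'.take n = ys'.take n) :
    (xs ⊗ xs').take n = (ys ⊗ ys').take n := by
  rw [take_eq_take_iff_forall_get_eq] at h h' ⊢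
  intro k hk
  rw [get_sshuffle, get_sshuffle]
  refine Finset.sum_congr rfl fun j hj => ?_
  have hjk : j ≤ k := Finset.mem_range_succ_iff.mp hj
  rw [h j (hjk.trans_lt hk), h' (k - j) ((Nat.sub_le k j).trans_lt hk)]

end Congruence

section Coinduction

variable {R : Stream' ℕ → Stream' ℕ → Prop} {s t : Stream' ℕ}

theorem take_eq_take_of_cl {n : ℕ} (hR : ∀ ⦃s t⦄, R s t → s.take n = t.take n)
    (hst : cl R s t) : s.take n = t.take n := by
  induction hst with
  | base h => exact hR h
  | refl => rfl
  | symm _ ih => exact ih.symm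
  | trans _ _ ih ih' => exact ih.trans ih'
  | cons hab _ ih => exact hab ▸ take_cons_congr _ ih
  | add _ _ ih ih' => exact take_sadd_congr ih ih'
  | mul _ _ ih ih' => exact take_sshuffle_congr ih ih'

theorem take_eq_take_of_bisim_upto
    (h : ∀ s t, R s t → s.head = t.head ∧ cl R s.tail t.tail) (n : ℕ) (hst : R s t) :
    s.take n = t.take n := by
  induction n generalizing s t with
  | zero => rfl
  | succ n ih =>
    obtain ⟨head_eq, tail_cl⟩ := h s t hst
    have tail_take : s.tail.take n = t.tail.take n := take_eq_take_of_cl (fun _ _ => ih) tail_cl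
    rw [take_succ, take_succ, head_eq, tail_take]

end Coinduction

theorem stmt_19 (R : Stream' ℕ → Stream' ℕ → Prop)
    (h : ∀ s t, R s t → s.head = t.head ∧ cl R s.tail t.tail) :
    ∀ s t, R s t → s = t := by
  intro s t hst
  exact take_theorem s t fun n => take_eq_take_of_bisim_upto h n hst
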